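/- arXiv:1502.02743 — 3 statements merged into one kernel-verified Lean document; each statement's English description precedes it below -/
import Mathlib

section
/- Theorem 1.1: let n be a nonnegative integer, Re(a) > 0 and 2n < Re(s) with s − 2n ≠ 1. Then S_n(a,s) := ∫₀^∞ t^{2n} sin(s·arctan(t/a)) / ((a² + t²)^{s/2}(e^{2πt} − 1)) dt equals (1/2) Σ_{m=0}^{2n} (−1)^{m+n} C(2n,m) a^m P₁(a, m+s−2n), where P₁(a,s) = ζ(s,a) − a^{−s}/2 − a^{1−s}/(s−1). -/
open Real Complex MeasureTheory Set Finset

/-- The analytically continued Hurwitz zeta function `ζ(s, a)` for real `a > 0`,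
expressed via Mathlib's periodic Hurwitz zeta by removing the initial terms. -/
noncomputable def HZ (s : ℂ) (a : ℝ) : ℂ :=
  HurwitzZeta.hurwitzZeta (a : UnitAddCircle) s -
    ∑ j ∈ Finset.range (⌈a⌉ - 1).toNat, ((a : ℂ) - ((⌈a⌉ : ℤ) - 1) + j) ^ (-s)

/-- `P₁(a, s) = ζ(s, a) − a^{−s}/2 − a^{1−s}/(s−1)`. -/
noncomputable def P1 (a : ℝ) (s : ℂ) : ℂ :=
  HZ s a - (a : ℂ) ^ (-s) / 2 - (a : ℂ) ^ (1 - s) / (s - 1)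

open Filter Topology

lemma kpos {t : ℝ} (ht : 0 < t) : 0 < Real.exp (2 * π * t) - 1 := by
  have : 1 < Real.exp (2 * π * t) := by
    rw [Real.one_lt_exp_iff]; positivity
  linarith

lemma kbound {t : ℝ} (ht : 0 < t) : t / (Real.exp (2 * π * t) - 1) ≤ Real.exp (-π * t) := by
  rw [div_le_iff₀ (kpos ht)]
  have h1 : π * t ≤ Real.sinh (π * t) := Real.self_le_sinh_iff.2 (by positivity)
  have h2 : Real.exp (-π * t) * (Real.exp (2 * π * t) - 1) = 2 * Real.sinh (π * t) := by
    rw [Real.sinh_eq, mul_sub, ← Real.exp_add, mul_one]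
    ring_nf
  rw [h2]
  nlinarith [Real.pi_gt_three]

lemma tk_int : IntegrableOn (fun t : ℝ => t / (Real.exp (2 * π * t) - 1)) (Ioi 0) := by
  refine Integrable.mono' (integrableOn_exp_mul_Ioi (a := -π) (by linarith [Real.pi_pos]) 0) ?_ ?_
  · exact (by fun_prop : Measurable (fun t : ℝ => t / (Real.exp (2 * π * t) - 1))).aestronglyMeasurable
  · filter_upwards [ae_restrict_mem measurableSet_Ioi] with t ht
    rw [Real.norm_of_nonneg (div_nonneg (le_of_lt ht) (kpos ht).le)]
    exact kbound ht

lemma sin_bound {t x : ℝ} (ht : 0 < t) (hx : 0 < x) : |Real.sin (t * x)| ≤ t * x := by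
  have := Real.abs_sin_le_abs (x := t * x)
  rwa [abs_of_pos (mul_pos ht hx)] at this

lemma sin_exp_int {b : ℝ} (hb : 0 < b) (x : ℝ) :
    ∫ t in Ioi (0 : ℝ), Real.sin (t * x) * Real.exp (-b * t) = x / (x ^ 2 + b ^ 2) := by
  have hre : (-b + x * I : ℂ).re < 0 := by simp [hb]
  have h1 := integral_exp_mul_complex_Ioi hre 0
  have h2 := integrableOn_exp_mul_complex_Ioi hre 0
  have h3 := Complex.imCLM.integral_comp_comm h2
  rw [h1] at h3
  have e : ∀ t : ℝ, Complex.imCLM (Complex.exp ((-b + x * I) * t)) = Real.sin (t * x) * Real.exp (-b * t) := by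
    intro t
    simp [Complex.exp_im, mul_comm]
  simp_rw [e] at h3
  rw [h3]
  simp [Complex.div_im, Complex.normSq_apply]
  ring

lemma hasSum_geo {t : ℝ} (ht : 0 < t) :
    HasSum (fun k : ℕ => Real.exp (-(2 * π * (k + 1)) * t)) (1 / (Real.exp (2 * π * t) - 1)) := by
  have h := hasSum_geometric_of_lt_one (Real.exp_pos (-(2 * π * t))).le
    (by rw [Real.exp_lt_one_iff]; simp; positivity)
  have h' := h.mul_left (Real.exp (-(2 * π * t)))
  convert! h' using 1
  · ext k
    rw [← Real.exp_nat_mul, ← Real.exp_add]; congr 1; ring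
  · rw [Real.exp_neg]
    have := kpos ht
    have := Real.exp_pos (2 * π * t)
    field_simp

lemma sin_hasSum {x : ℝ} (hx : 0 < x) :
    HasSum (fun k : ℕ => x / (x ^ 2 + (2 * π * (k + 1)) ^ 2))
      (∫ t in Ioi (0 : ℝ), Real.sin (t * x) / (Real.exp (2 * π * t) - 1)) := by
  have := hasSum_integral_of_dominated_convergence (μ := volume.restrict (Ioi (0 : ℝ)))
    (F := fun (k : ℕ) t => Real.sin (t * x) * Real.exp (-(2 * π * (k + 1)) * t))
    (f := fun t => Real.sin (t * x) / (Real.exp (2 * π * t) - 1))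
    (fun (k : ℕ) t => t * x * Real.exp (-(2 * π * (k + 1)) * t)) ?_ ?_ ?_ ?_ ?_
  · convert! this using 2 with k
    rw [sin_exp_int (by positivity)]
  · intro k
    exact Continuous.aestronglyMeasurable (by fun_prop)
  · intro k
    filter_upwards [ae_restrict_mem measurableSet_Ioi] with t ht
    rw [norm_mul, Real.norm_eq_abs, Real.norm_eq_abs, Real.abs_exp]
    gcongr
    exact sin_bound ht hx
  · filter_upwards [ae_restrict_mem measurableSet_Ioi] with t ht
    exact (hasSum_geo ht).summable.mul_left _
  · refine (tk_int.const_mul x).congr ?_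
    filter_upwards [ae_restrict_mem measurableSet_Ioi] with t ht
    rw [((hasSum_geo ht).mul_left _).tsum_eq]
    ring
  · filter_upwards [ae_restrict_mem measurableSet_Ioi] with t ht
    convert! (hasSum_geo ht).mul_left (Real.sin (t * x)) using 1
    ring

noncomputable def GG (x : ℝ) : ℝ := 1 / (1 - Real.exp (-x)) - 1 / 2 - 1 / x

lemma expneg_lt {x : ℝ} (hx : 0 < x) : 0 < 1 - Real.exp (-x) := by
  have : Real.exp (-x) < 1 := by rw [Real.exp_lt_one_iff]; linarith
  linarith

lemma sin_int {x : ℝ} (hx : 0 < x) :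
    ∫ t in Ioi (0 : ℝ), Real.sin (t * x) / (Real.exp (2 * π * t) - 1) = GG x / 2 := by
  rw [← (sin_hasSum hx).tsum_eq]
  have hpi : (π : ℂ) ≠ 0 := by exact_mod_cast Real.pi_ne_zero
  have hxc : (x : ℂ) ≠ 0 := by exact_mod_cast hx.ne'
  set z : ℂ := x * I / (2 * π) with hz
  have hzim : z.im = x / (2 * π) := by
    have : z = ((x / (2 * π) : ℝ) : ℂ) * I := by rw [hz]; push_cast; ring
    rw [this, Complex.im_ofReal_mul, Complex.I_im, mul_one]
  have hzi : z ∈ Complex.integerComplement := by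
    rintro ⟨m, hm⟩
    have : z.im = 0 := by rw [← hm]; simp
    rw [hzim] at this
    have : 0 < x / (2 * π) := by positivity
    linarith
  have h := cot_series_rep' hzi
  have hterm : ∀ k : ℕ, 1 / (z - (k + 1)) + 1 / (z + (k + 1)) =
      (-4 * π * I) * ((x / (x ^ 2 + (2 * π * (k + 1)) ^ 2) : ℝ) : ℂ) := by
    intro k
    have n1 : z - (k + 1) ≠ 0 := by
      intro h0
      have : (z - (k + 1)).im = 0 := by rw [h0]; simp
      simp [hzim] at this
      exact hx.ne' this
    have n2 : z + (k + 1) ≠ 0 := by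
      intro h0
      have : (z + (k + 1)).im = 0 := by rw [h0]; simp
      simp [hzim] at this
      exact hx.ne' this
    have n3 : ((x:ℂ) ^ 2 + (2 * π * (k + 1)) ^ 2) ≠ 0 := by
      have : x ^ 2 + (2 * π * (k + 1)) ^ 2 ≠ 0 := by positivity
      exact_mod_cast this
    have e : (x:ℂ) ^ 2 + (2 * π * (k + 1)) ^ 2 = -(4 * π ^ 2) * ((z - (k + 1)) * (z + (k + 1))) := by
      rw [hz]; field_simp; ring_nf; simp
    push_cast
    rw [e]
    have hx' : (x : ℂ) = - (2 * π) * I * z := by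
      rw [hz]; field_simp; simp
    rw [hx']
    field_simp
    ring_nf
    simp
  simp_rw [hterm] at h
  rw [tsum_mul_left, Complex.cot_pi_eq_exp_ratio, ← Complex.ofReal_tsum] at h
  have e2 : 2 * π * I * z = ((-x : ℝ) : ℂ) := by
    rw [hz]; field_simp; simp
  rw [e2, ← Complex.ofReal_exp] at h
  have hne : (1 - (Real.exp (-x) : ℂ)) ≠ 0 := by
    have := (expneg_lt hx).ne'
    exact_mod_cast this
  have : ((∑' k : ℕ, x / (x ^ 2 + (2 * π * (k + 1)) ^ 2) : ℝ) : ℂ) = ((GG x / 2 : ℝ) : ℂ) := by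
    have h4 : (-4 * π * I : ℂ) ≠ 0 := by simp [hpi]
    apply mul_left_cancel₀ h4
    rw [← h, hz, GG]
    push_cast at hne ⊢
    generalize Complex.exp (-(x:ℂ)) = E at hne ⊢
    field_simp
    ring_nf
    simp
    ring
  exact_mod_cast this

lemma rpow_exp_int {σ b : ℝ} (hσ : -1 < σ) (hb : 0 < b) :
    IntegrableOn (fun x : ℝ => x ^ σ * Real.exp (-b * x)) (Ioi 0) := by
  simpa using integrableOn_rpow_mul_exp_neg_mul_rpow (p := 1) hσ one_pos hb

lemma norm_integrand {s z : ℂ} {x : ℝ} (hx : 0 < x) :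
    ‖(x : ℂ) ^ (s - 1) * Complex.exp (-(z * x))‖ = x ^ (s.re - 1) * Real.exp (-z.re * x) := by
  rw [norm_mul, Complex.norm_cpow_eq_rpow_re_of_pos hx, Complex.norm_exp]
  simp

lemma meas_integrand (s z : ℂ) :
    Measurable (fun x : ℝ => (x : ℂ) ^ (s - 1) * Complex.exp (-(z * x))) := by
  fun_prop

lemma gam_integrable {s z : ℂ} (hs : 0 < s.re) (hz : 0 < z.re) :
    IntegrableOn (fun x : ℝ => (x : ℂ) ^ (s - 1) * Complex.exp (-(z * x))) (Ioi 0) := by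
  refine Integrable.mono' (rpow_exp_int (σ := s.re - 1) (by linarith) hz)
    (meas_integrand s z).aestronglyMeasurable ?_
  filter_upwards [ae_restrict_mem measurableSet_Ioi] with x hx
  exact (norm_integrand hx).le

lemma gam_diff {s z : ℂ} (hs : 0 < s.re) (hz : 0 < z.re) :
    DifferentiableAt ℂ
      (fun z : ℂ => ∫ x in Ioi (0 : ℝ), (x : ℂ) ^ (s - 1) * Complex.exp (-(z * x))) z := by
  have := hasDerivAt_integral_of_dominated_loc_of_deriv_le (μ := volume.restrict (Ioi (0 : ℝ)))
    (F := fun (z : ℂ) (x : ℝ) => (x : ℂ) ^ (s - 1) * Complex.exp (-(z * x)))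
    (F' := fun (z : ℂ) (x : ℝ) => (x : ℂ) ^ (s - 1) * (Complex.exp (-(z * x)) * (-x)))
    (x₀ := z) (s := Metric.ball z (z.re / 2))
    (bound := fun x => x ^ s.re * Real.exp (-(z.re / 2) * x))
    (Metric.ball_mem_nhds _ (by positivity))
    (Eventually.of_forall fun w => (meas_integrand s w).aestronglyMeasurable)
    (gam_integrable hs hz)
    (by exact (by fun_prop : Measurable _).aestronglyMeasurable)
    ?_ (rpow_exp_int (by linarith) (by positivity)) ?_
  · exact this.2.differentiableAt
  · filter_upwards [ae_restrict_mem measurableSet_Ioi] with x hx w hw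
    have hx' : 0 < x := hx
    rw [← mul_assoc, norm_mul, norm_integrand hx, norm_neg, Complex.norm_real,
      Real.norm_of_nonneg hx'.le]
    have hw2 : z.re / 2 ≤ w.re := by
      have h1 : |(w - z).re| ≤ ‖w - z‖ := Complex.abs_re_le_norm _
      have h2 : ‖w - z‖ < z.re / 2 := by simpa [dist_eq_norm] using hw
      have h3 := (abs_le.1 (h1.trans h2.le)).1
      simp at h3
      linarith
    have e : x ^ s.re = x ^ (s.re - 1) * x := by
      rw [Real.rpow_sub_one hx'.ne']; field_simp
    rw [e]
    have : Real.exp (-w.re * x) ≤ Real.exp (-(z.re / 2) * x) := by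
      apply Real.exp_le_exp.2; nlinarith
    calc _ = x ^ (s.re - 1) * x * Real.exp (-w.re * x) := by ring
      _ ≤ _ := by gcongr
  · filter_upwards with x w hw
    have h1 : HasDerivAt (fun w : ℂ => -(w * x)) (-x : ℂ) w := by
      simpa using! ((hasDerivAt_id w).mul_const (x : ℂ)).neg
    exact h1.cexp.const_mul _

lemma isOpen_halfplane (c : ℝ) : IsOpen {z : ℂ | c < z.re} :=
  isOpen_lt continuous_const Complex.continuous_re

lemma gam_int {s z : ℂ} (hs : 0 < s.re) (hz : 0 < z.re) :
    ∫ x in Ioi (0 : ℝ), (x : ℂ) ^ (s - 1) * Complex.exp (-(z * x)) = z ^ (-s) * Complex.Gamma s := by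
  have hU := isOpen_halfplane 0
  have h1 : AnalyticOnNhd ℂ
      (fun z : ℂ => ∫ x in Ioi (0 : ℝ), (x : ℂ) ^ (s - 1) * Complex.exp (-(z * x)))
      {z : ℂ | 0 < z.re} :=
    DifferentiableOn.analyticOnNhd
      (fun w hw => (gam_diff hs hw).differentiableWithinAt) hU
  have h2 : AnalyticOnNhd ℂ (fun z : ℂ => z ^ (-s) * Complex.Gamma s) {z : ℂ | 0 < z.re} := by
    refine DifferentiableOn.analyticOnNhd (fun w hw => ?_) hU
    refine DifferentiableAt.differentiableWithinAt ?_
    refine DifferentiableAt.mul_const ?_ _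
    exact (differentiableAt_id.cpow_const (Or.inl hw))
  have hc : IsPreconnected {z : ℂ | 0 < z.re} := (convex_halfSpace_re_gt 0).isPreconnected
  have h3 : ∃ᶠ w in 𝓝[≠] (1 : ℂ), (∫ x in Ioi (0 : ℝ), (x : ℂ) ^ (s - 1) * Complex.exp (-(w * x)))
      = w ^ (-s) * Complex.Gamma s := by
    have ht : Tendsto (fun r : ℝ => (r : ℂ)) (𝓝[>] 1) (𝓝[≠] (1 : ℂ)) := by
      refine tendsto_nhdsWithin_iff.2 ⟨?_, ?_⟩
      · have : Tendsto (fun r : ℝ => (r : ℂ)) (𝓝 1) (𝓝 ((1 : ℝ) : ℂ)) :=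
          Complex.continuous_ofReal.tendsto 1
        rw [Complex.ofReal_one] at this
        exact this.mono_left nhdsWithin_le_nhds
      · filter_upwards [self_mem_nhdsWithin] with r hr
        have : r ≠ 1 := (ne_of_gt hr)
        simpa using this
    refine ht.frequently (Eventually.frequently ?_)
    filter_upwards [self_mem_nhdsWithin] with r hr
    have hr0 : 0 < r := lt_trans one_pos hr
    rw [Complex.integral_cpow_mul_exp_neg_mul_Ioi hs hr0, one_div, Complex.inv_cpow, Complex.cpow_neg]
    rw [Complex.arg_ofReal_of_nonneg hr0.le]
    exact Real.pi_pos.ne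
  exact AnalyticOnNhd.eqOn_of_preconnected_of_frequently_eq h1 h2 hc
    (by simp : (1 : ℂ) ∈ {z : ℂ | 0 < z.re}) h3 hz

lemma clog_eq {a : ℝ} (ha : 0 < a) (t : ℝ) :
    Complex.log (a + t * I) = ((1 / 2 * Real.log (a ^ 2 + t ^ 2) : ℝ) : ℂ) +
      (Real.arctan (t / a) : ℂ) * I := by
  have hp : 0 < a ^ 2 + t ^ 2 := by positivity
  have hs : Real.exp (1 / 2 * Real.log (a ^ 2 + t ^ 2)) = √(a ^ 2 + t ^ 2) := by
    rw [Real.sqrt_eq_rpow, Real.rpow_def_of_pos hp, mul_comm]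
  have hq : √(1 + (t / a) ^ 2) = √(a ^ 2 + t ^ 2) / a := by
    have : 1 + (t / a) ^ 2 = (a ^ 2 + t ^ 2) / a ^ 2 := by field_simp
    rw [this, Real.sqrt_div hp.le, Real.sqrt_sq ha.le]
  have hsp : 0 < √(a ^ 2 + t ^ 2) := Real.sqrt_pos.2 hp
  have he : Complex.exp (((1 / 2 * Real.log (a ^ 2 + t ^ 2) : ℝ) : ℂ) +
      (Real.arctan (t / a) : ℂ) * I) = a + t * I := by
    rw [Complex.exp_add, ← Complex.ofReal_exp, hs, Complex.exp_mul_I, ← Complex.ofReal_cos,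
      ← Complex.ofReal_sin, Real.cos_arctan, Real.sin_arctan, hq]
    have h1 : (√(a ^ 2 + t ^ 2) : ℂ) ≠ 0 := by exact_mod_cast hsp.ne'
    have h2 : (a : ℂ) ≠ 0 := by exact_mod_cast ha.ne'
    push_cast
    field_simp
  rw [← he, Complex.log_exp]
  · simp only [Complex.add_im, Complex.ofReal_im, Complex.im_ofReal_mul, Complex.I_im]
    linarith [Real.neg_pi_div_two_lt_arctan (t / a), Real.pi_pos]
  · simp only [Complex.add_im, Complex.ofReal_im, Complex.im_ofReal_mul, Complex.I_im]
    linarith [Real.arctan_lt_pi_div_two (t / a), Real.pi_pos]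

lemma add_I_ne {a : ℝ} (ha : 0 < a) (t : ℝ) : (a + t * I : ℂ) ≠ 0 := by
  intro h
  have : (a + t * I : ℂ).re = 0 := by rw [h]; simp
  simp at this
  exact ha.ne' this

noncomputable def TT (a : ℝ) (s : ℂ) (t : ℝ) : ℂ :=
  Complex.sin (s * (Real.arctan (t / a) : ℂ)) / (((a ^ 2 + t ^ 2 : ℝ) : ℂ) ^ (s / 2))

lemma TT_eq {a : ℝ} (ha : 0 < a) (s : ℂ) (t : ℝ) :
    TT a s t = ((a - t * I : ℂ) ^ (-s) - (a + t * I : ℂ) ^ (-s)) / (2 * I) := by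
  have hp : 0 < a ^ 2 + t ^ 2 := by positivity
  have e1 : (a - t * I : ℂ) = a + ((-t : ℝ) : ℂ) * I := by push_cast; ring
  have n2 : ((a ^ 2 + t ^ 2 : ℝ) : ℂ) ≠ 0 := by exact_mod_cast hp.ne'
  rw [e1, Complex.cpow_def_of_ne_zero (add_I_ne ha _), Complex.cpow_def_of_ne_zero (add_I_ne ha _),
    clog_eq ha, clog_eq ha, TT, Complex.cpow_def_of_ne_zero n2, ← Complex.ofReal_log hp.le,
    neg_div, Real.arctan_neg, Complex.sin, neg_sq]
  generalize Real.arctan (t / a) = θ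
  generalize Real.log (a ^ 2 + t ^ 2) = L
  push_cast
  have ea : ((1 / 2 * L + -θ * I) * -s : ℂ) = -(L * (s / 2)) + s * θ * I := by ring
  have eb : ((1 / 2 * L + θ * I) * -s : ℂ) = -(L * (s / 2)) + -(s * θ) * I := by ring
  rw [ea, eb, Complex.exp_add, Complex.exp_add, Complex.exp_neg (L * (s / 2) : ℂ)]
  have := Complex.exp_ne_zero (L * (s / 2) : ℂ)
  field_simp
  ring_nf
  simp

lemma TT_int {a : ℝ} (ha : 0 < a) {s : ℂ} (hs : 0 < s.re) (t : ℝ) :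
    ∫ x in Ioi (0 : ℝ), (x : ℂ) ^ (s - 1) * Complex.exp (-(a * x)) * (Real.sin (t * x) : ℂ) =
      Complex.Gamma s * TT a s t := by
  have r1 : 0 < (a - t * I : ℂ).re := by simpa using ha
  have r2 : 0 < (a + t * I : ℂ).re := by simpa using ha
  rw [TT_eq ha, mul_div_assoc', mul_sub, mul_comm, mul_comm (Complex.Gamma s) ((a + t * I : ℂ) ^ (-s)),
    ← gam_int hs r1, ← gam_int hs r2, ← integral_sub (gam_integrable hs r1) (gam_integrable hs r2),
    ← integral_div]
  refine setIntegral_congr_fun measurableSet_Ioi fun x hx => ?_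
  have e1 : Complex.exp (-((a - t * I) * x)) = Complex.exp (-(a * x)) * Complex.exp (t * x * I) := by
    rw [← Complex.exp_add]; ring_nf
  have e2 : Complex.exp (-((a + t * I) * x)) = Complex.exp (-(a * x)) * Complex.exp (-(t * x) * I) := by
    rw [← Complex.exp_add]; ring_nf
  rw [e1, e2, Complex.ofReal_sin, Complex.sin]
  push_cast
  field_simp
  ring_nf
  simp

lemma K_nonneg_ae : ∀ᵐ p : ℝ × ℝ ∂((volume.restrict (Ioi (0:ℝ))).prod (volume.restrict (Ioi (0:ℝ)))),
    0 < p.1 ∧ 0 < p.2 := by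
  rw [Measure.prod_restrict]
  filter_upwards [ae_restrict_mem (measurableSet_Ioi.prod measurableSet_Ioi)] with p hp
  exact ⟨hp.1, hp.2⟩

lemma prod_integrable {a : ℝ} (ha : 0 < a) {s : ℂ} (hs : 0 < s.re) :
    Integrable (Function.uncurry fun (t x : ℝ) => ((x : ℂ) ^ (s - 1) * Complex.exp (-(a * x))) *
      ((Real.sin (t * x) / (Real.exp (2 * π * t) - 1) : ℝ) : ℂ))
      ((volume.restrict (Ioi (0:ℝ))).prod (volume.restrict (Ioi (0:ℝ)))) := by
  have hd := Integrable.mul_prod tk_int (rpow_exp_int (σ := s.re) (by linarith) ha)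
  refine Integrable.mono' hd ?_ ?_
  · refine Measurable.aestronglyMeasurable ?_
    unfold Function.uncurry
    fun_prop
  · filter_upwards [K_nonneg_ae] with p hp
    obtain ⟨t, x⟩ := p
    obtain ⟨ht, hx⟩ := hp
    simp only at ht hx
    simp only [Function.uncurry]
    rw [norm_mul, norm_integrand hx, Complex.norm_real, Real.norm_eq_abs, abs_div,
      abs_of_pos (kpos ht), Complex.ofReal_re]
    have e : x ^ s.re = x ^ (s.re - 1) * x := by
      rw [Real.rpow_sub_one hx.ne']; field_simp
    have := kpos ht
    calc _ ≤ x ^ (s.re - 1) * Real.exp (-a * x) * (t * x / (Real.exp (2 * π * t) - 1)) := by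
          gcongr
          exact sin_bound ht hx
      _ = _ := by rw [e]; ring

noncomputable def ff (a : ℝ) (x : ℝ) : ℂ := ((Real.exp (-a * x) * GG x : ℝ) : ℂ)

lemma inner_x {a : ℝ} (ha : 0 < a) {s : ℂ} (hs : 0 < s.re) (t : ℝ) :
    ∫ x in Ioi (0 : ℝ), ((x : ℂ) ^ (s - 1) * Complex.exp (-(a * x))) *
      ((Real.sin (t * x) / (Real.exp (2 * π * t) - 1) : ℝ) : ℂ) =
    Complex.Gamma s * (TT a s t / ((Real.exp (2 * π * t) - 1 : ℝ) : ℂ)) := by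
  rw [mul_div_assoc', ← TT_int ha hs, ← integral_div]
  congr 1
  ext x
  push_cast
  ring

lemma hermite_integrable {a : ℝ} (ha : 0 < a) {s : ℂ} (hs : 0 < s.re) :
    IntegrableOn (fun t : ℝ => TT a s t / ((Real.exp (2 * π * t) - 1 : ℝ) : ℂ)) (Ioi 0) := by
  have h := (prod_integrable ha hs).integral_prod_left
  simp only [Function.uncurry, inner_x ha hs] at h
  have hG := Complex.Gamma_ne_zero_of_re_pos hs
  have h2 := h.const_mul (Complex.Gamma s)⁻¹
  refine h2.congr (Eventually.of_forall fun t => ?_)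
  simp only
  rw [inv_mul_cancel_left₀ hG]

lemma hermite_mellin {a : ℝ} (ha : 0 < a) {s : ℂ} (hs : 0 < s.re) :
    Complex.Gamma s * ∫ t in Ioi (0 : ℝ), TT a s t / ((Real.exp (2 * π * t) - 1 : ℝ) : ℂ) =
      mellin (ff a) s / 2 := by
  have h := integral_integral_swap (prod_integrable ha hs)
  simp only [inner_x ha hs] at h
  rw [integral_const_mul] at h
  rw [h, mellin, ← integral_div]
  refine setIntegral_congr_fun measurableSet_Ioi fun x hx => ?_
  rw [integral_const_mul, integral_complex_ofReal, sin_int hx, ff, smul_eq_mul]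
  push_cast
  ring_nf

lemma GG_bound : ∃ C : ℝ, 0 ≤ C ∧ ∀ x : ℝ, 0 < x → |GG x| ≤ C * x := by
  refine ⟨2 * ∫ t in Ioi (0 : ℝ), t / (Real.exp (2 * π * t) - 1), ?_, ?_⟩
  · refine mul_nonneg (by norm_num) (setIntegral_nonneg measurableSet_Ioi fun t ht => ?_)
    exact div_nonneg (le_of_lt ht) (kpos ht).le
  · intro x hx
    have h1 : GG x = 2 * ∫ t in Ioi (0 : ℝ), Real.sin (t * x) / (Real.exp (2 * π * t) - 1) := by
      rw [sin_int hx]; ring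
    rw [h1, abs_mul, abs_two, mul_assoc]
    gcongr
    rw [mul_comm _ x, ← integral_const_mul, ← Real.norm_eq_abs]
    refine norm_integral_le_of_norm_le (tk_int.const_mul x) ?_
    filter_upwards [ae_restrict_mem measurableSet_Ioi] with t ht
    rw [norm_div, Real.norm_eq_abs, Real.norm_eq_abs, abs_of_pos (kpos ht), mul_div_assoc']
    have := kpos ht
    gcongr
    rw [mul_comm x]
    exact sin_bound ht hx

lemma ff_cont (a : ℝ) : ContinuousOn (ff a) (Ioi 0) := by
  refine Complex.continuous_ofReal.comp_continuousOn ?_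
  refine ContinuousOn.mul (by fun_prop) ?_
  unfold GG
  refine ContinuousOn.sub (ContinuousOn.sub ?_ (by fun_prop)) ?_
  · exact ContinuousOn.div (by fun_prop) (by fun_prop) fun x hx => (expneg_lt hx).ne'
  · exact ContinuousOn.div (by fun_prop) (by fun_prop) fun x hx => (ne_of_gt hx)

lemma ff_loc (a : ℝ) : LocallyIntegrableOn (ff a) (Ioi 0) :=
  (ff_cont a).locallyIntegrableOn measurableSet_Ioi

lemma ff_norm {a C x : ℝ} (h : |GG x| ≤ C * x) : ‖ff a x‖ ≤ Real.exp (-a * x) * (C * x) := by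
  rw [ff, Complex.norm_real, norm_mul, Real.norm_eq_abs, Real.norm_eq_abs, Real.abs_exp]
  gcongr

lemma ff_top {a : ℝ} (ha : 0 < a) : ff a =O[atTop] fun x => Real.exp (-(a / 2) * x) := by
  obtain ⟨C, hC, h⟩ := GG_bound
  refine Asymptotics.IsBigO.of_bound (C * (2 / a)) ?_
  filter_upwards [eventually_gt_atTop 0] with x hx
  refine (ff_norm (h x hx)).trans ?_
  rw [Real.norm_eq_abs, Real.abs_exp]
  have h1 : x ≤ 2 / a * Real.exp (a / 2 * x) := by
    have := Real.add_one_le_exp (a / 2 * x)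
    calc x = 2 / a * (a / 2 * x) := by field_simp
      _ ≤ _ := by gcongr; linarith
  have h2 : Real.exp (-(a / 2) * x) = Real.exp (-a * x) * Real.exp (a / 2 * x) := by
    rw [← Real.exp_add]; ring_nf
  rw [h2]
  calc _ ≤ Real.exp (-a * x) * (C * (2 / a * Real.exp (a / 2 * x))) := by gcongr
    _ = _ := by ring

lemma ff_bot {a : ℝ} (ha : 0 < a) : ff a =O[𝓝[>] 0] fun x : ℝ => x ^ (-(0 : ℝ)) := by
  obtain ⟨C, hC, h⟩ := GG_bound
  refine Asymptotics.IsBigO.of_bound C ?_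
  filter_upwards [Ioo_mem_nhdsGT (one_pos : (0:ℝ) < 1)] with x hx
  refine (ff_norm (h x hx.1)).trans ?_
  simp only [neg_zero, Real.rpow_zero, norm_one, mul_one]
  have h1 : Real.exp (-a * x) ≤ 1 := by
    apply Real.exp_le_one_iff.2; nlinarith [hx.1]
  calc _ ≤ 1 * (C * 1) := by
        gcongr
        exact mul_nonneg hC hx.1.le
        exact hx.2.le
    _ = C := by ring

lemma ff_mellin_conv {a : ℝ} (ha : 0 < a) {s : ℂ} (hs : 0 < s.re) : MellinConvergent (ff a) s :=
  mellinConvergent_of_isBigO_rpow_exp (half_pos ha) (ff_loc a) (ff_top ha) (ff_bot ha) hs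

lemma ff_mellin_diff {a : ℝ} (ha : 0 < a) {s : ℂ} (hs : 0 < s.re) :
    DifferentiableAt ℂ (mellin (ff a)) s :=
  mellin_differentiableAt_of_isBigO_rpow_exp (half_pos ha) (ff_loc a) (ff_top ha) (ff_bot ha) hs

lemma HZ_hasSum {a : ℝ} (ha : 0 < a) {s : ℂ} (hs : 1 < s.re) :
    HasSum (fun n : ℕ => 1 / (n + a : ℂ) ^ s) (HZ s a) := by
  set N := (⌈a⌉ - 1).toNat with hN
  have hc : 0 < ⌈a⌉ := Int.ceil_pos.2 ha
  have hNz : (N : ℤ) = ⌈a⌉ - 1 := Int.toNat_of_nonneg (by omega)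
  have hNr : (N : ℝ) = ⌈a⌉ - 1 := by exact_mod_cast hNz
  have hNc : (N : ℂ) = ((⌈a⌉ : ℤ) : ℂ) - 1 := by exact_mod_cast hNz
  have hb : a - N ∈ Icc (0 : ℝ) 1 := by
    rw [hNr]
    constructor
    · linarith [Int.ceil_lt_add_one a]
    · linarith [Int.le_ceil a]
  have h := HurwitzZeta.hasSum_hurwitzZeta_of_one_lt_re hb hs
  have hcirc : ((a - N : ℝ) : UnitAddCircle) = (a : UnitAddCircle) := by
    have : ((N : ℝ) : UnitAddCircle) = 0 := by
      rw [AddCircle.coe_eq_zero_iff]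
      exact ⟨N, by simp⟩
    rw [AddCircle.coe_sub, this, sub_zero]
  rw [hcirc] at h
  have h2 := (hasSum_nat_add_iff' N).2 h
  rw [HZ, ← hN, ← hNc]
  convert! h2 using 2
  · rename_i n
    push_cast
    ring_nf
  · refine Finset.sum_congr rfl fun j _ => ?_
    rw [Complex.cpow_neg, one_div]
    push_cast
    ring_nf

lemma mellin_F {a : ℝ} (ha : 0 < a) {s : ℂ} (hs : 1 < s.re) :
    mellin (fun t => ((Real.exp (-a * t) / (1 - Real.exp (-t)) : ℝ) : ℂ)) s
      = Complex.Gamma s * HZ s a := by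
  have h := hasSum_mellin (a := fun _ : ℕ => (1 : ℂ)) (p := fun i : ℕ => (i : ℝ) + a)
    (F := fun t => ((Real.exp (-a * t) / (1 - Real.exp (-t)) : ℝ) : ℂ)) (s := s)
    (fun i => Or.inr (by positivity)) (by linarith) ?_ ?_
  · have h2 := (HZ_hasSum ha hs).mul_left (Complex.Gamma s)
    refine h.unique ?_
    convert! h2 using 2
    push_cast
    ring
  · intro t ht
    have ht' : 0 < t := ht
    have hg := hasSum_geometric_of_lt_one (Real.exp_pos (-t)).le
      (by rw [Real.exp_lt_one_iff]; linarith)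
    have h' := hg.mul_left (Real.exp (-a * t))
    have h'' := Complex.hasSum_ofReal.2 h'
    convert! h'' using 2
    rename_i k
    rw [← Real.exp_nat_mul, ← Real.exp_add, one_mul]
    congr 2
    ring
  · have := (Real.summable_one_div_nat_add_rpow a s.re).2 hs
    refine this.congr fun i => ?_
    rw [norm_one, abs_of_pos (by positivity)]

lemma mellin_eq_of_one_lt {a : ℝ} (ha : 0 < a) {s : ℂ} (hs : 1 < s.re) :
    mellin (ff a) s = Complex.Gamma s * P1 a s := by
  have ha' : 0 < (a : ℂ).re := by simpa using ha
  have hs0 : 0 < s.re := by linarith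
  have hs1 : 0 < (s - 1).re := by simpa using hs
  have g1 := gam_integrable hs0 ha'
  have g2 := gam_integrable hs1 ha'
  have i1 := gam_int hs0 ha'
  have i2 := gam_int hs1 ha'
  have m1 : MellinConvergent (fun t : ℝ => Complex.exp (-(a * t)) / 2) s := by
    refine (g1.div_const 2).congr (Eventually.of_forall fun t => ?_)
    simp only [smul_eq_mul]
    ring
  have e1 : mellin (fun t : ℝ => Complex.exp (-(a * t)) / 2) s
      = Complex.Gamma s * ((a : ℂ) ^ (-s) / 2) := by
    rw [mul_div_assoc', mul_comm, ← i1, ← integral_div, mellin]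
    congr 1; ext t
    rw [smul_eq_mul]; ring
  have key : ∀ t ∈ Ioi (0 : ℝ), (t : ℂ) ^ (s - 1 - 1) * Complex.exp (-(a * t)) =
      (t : ℂ) ^ (s - 1) • (Complex.exp (-(a * t)) / t) := by
    intro t ht
    have : (t : ℂ) ≠ 0 := by exact_mod_cast (ne_of_gt ht)
    rw [Complex.cpow_sub _ _ this, Complex.cpow_one, smul_eq_mul]
    ring
  have m2 : MellinConvergent (fun t : ℝ => Complex.exp (-(a * t)) / t) s :=
    g2.congr_fun key measurableSet_Ioi
  have e2 : mellin (fun t : ℝ => Complex.exp (-(a * t)) / t) s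
      = Complex.Gamma s * ((a : ℂ) ^ (1 - s) / (s - 1)) := by
    rw [mellin, ← setIntegral_congr_fun measurableSet_Ioi key, i2]
    have hne : s - 1 ≠ 0 := by
      intro h; rw [h] at hs1; simp at hs1
    have := Complex.Gamma_add_one _ hne
    rw [sub_add_cancel] at this
    rw [this, neg_sub]
    field_simp
  have h3 := hasMellin_add (hasMellin_add (ff_mellin_conv ha hs0) m1).1 m2
  rw [(hasMellin_add (ff_mellin_conv ha hs0) m1).2, e1, e2] at h3
  have h4 := h3.2
  have h5 : mellin (fun t => ff a t + Complex.exp (-(a * t)) / 2 + Complex.exp (-(a * t)) / t) s =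
      mellin (fun t => ((Real.exp (-a * t) / (1 - Real.exp (-t)) : ℝ) : ℂ)) s := by
    refine setIntegral_congr_fun measurableSet_Ioi fun t ht => ?_
    simp only [ff, GG]
    congr 1
    push_cast
    rw [neg_mul]
    ring
  rw [h5, mellin_F ha hs] at h4
  rw [P1, mul_sub, mul_sub, h4]
  ring

lemma punctured_preconn : IsPreconnected {s : ℂ | 0 < s.re ∧ s ≠ 1} := by
  have h0 : IsPreconnected ({0}ᶜ : Set ℂ) :=
    (isConnected_compl_singleton_of_one_lt_rank (by simp) 0).isPreconnected
  have h1 := h0.image (fun z : ℂ => (Real.exp z.re : ℂ) + z.im * I) (by fun_prop)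
  convert! h1 using 1
  ext s
  simp only [mem_ofPred_eq, mem_image, mem_compl_iff, mem_singleton_iff]
  constructor
  · rintro ⟨h, h1⟩
    refine ⟨(Real.log s.re : ℂ) + s.im * I, ?_, ?_⟩
    · intro h0
      apply h1
      have r := congrArg Complex.re h0
      have i := congrArg Complex.im h0
      simp at r i
      apply Complex.ext
      · rcases r with r | r | r
        · linarith
        · simpa using r
        · linarith
      · simpa using i
    · apply Complex.ext
      · simp [-Complex.ofReal_exp, Real.exp_log h]
      · simp [-Complex.ofReal_exp]
  · rintro ⟨z, hz, rfl⟩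
    constructor
    · simp [-Complex.ofReal_exp, Real.exp_pos]
    · intro h
      apply hz
      have r := congrArg Complex.re h
      have i := congrArg Complex.im h
      simp [-Complex.ofReal_exp] at r i
      exact Complex.ext r i

lemma P1_diff {a : ℝ} (ha : 0 < a) {s : ℂ} (hs : s ≠ 1) :
    DifferentiableAt ℂ (P1 a) s := by
  have hac : (a : ℂ) ≠ 0 := by exact_mod_cast ha.ne'
  have hs' : s - 1 ≠ 0 := sub_ne_zero.2 hs
  unfold P1
  refine DifferentiableAt.sub (DifferentiableAt.sub ?_ ?_) ?_
  · unfold HZ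
    refine DifferentiableAt.sub (HurwitzZeta.differentiableAt_hurwitzZeta _ hs) ?_
    refine DifferentiableAt.fun_sum fun j _ => ?_
    refine DifferentiableAt.const_cpow (by fun_prop) (Or.inl ?_)
    have h : 0 < a - ((⌈a⌉ : ℝ) - 1) + j := by
      have : (0:ℝ) ≤ j := by positivity
      linarith [Int.ceil_lt_add_one a]
    exact_mod_cast h.ne'
  · exact (DifferentiableAt.const_cpow (by fun_prop) (Or.inl hac)).div_const _
  · exact (DifferentiableAt.const_cpow (by fun_prop) (Or.inl hac)).div (by fun_prop) hs'

lemma mellin_eq {a : ℝ} (ha : 0 < a) {s : ℂ} (hs : 0 < s.re) (h1 : s ≠ 1) :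
    mellin (ff a) s = Complex.Gamma s * P1 a s := by
  have hU : IsOpen {s : ℂ | 0 < s.re ∧ s ≠ 1} := (isOpen_halfplane 0).inter isOpen_ne
  have A1 : AnalyticOnNhd ℂ (mellin (ff a)) {s : ℂ | 0 < s.re ∧ s ≠ 1} :=
    DifferentiableOn.analyticOnNhd
      (fun w hw => (ff_mellin_diff ha hw.1).differentiableWithinAt) hU
  have A2 : AnalyticOnNhd ℂ (fun s => Complex.Gamma s * P1 a s) {s : ℂ | 0 < s.re ∧ s ≠ 1} := by
    refine DifferentiableOn.analyticOnNhd (fun w hw => ?_) hU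
    refine DifferentiableAt.differentiableWithinAt ?_
    refine DifferentiableAt.mul (Complex.differentiableAt_Gamma _ fun m hm => ?_) (P1_diff ha hw.2)
    have := hw.1
    rw [hm] at this
    simp at this
    have h0 : (0:ℝ) ≤ m := by positivity
    linarith
  refine AnalyticOnNhd.eqOn_of_preconnected_of_eventuallyEq A1 A2 punctured_preconn
    (z₀ := 2) (by simp) ?_ ⟨hs, h1⟩
  filter_upwards [(isOpen_halfplane 1).mem_nhds (by simp : (2:ℂ) ∈ {z : ℂ | 1 < z.re})] with w hw
  exact mellin_eq_of_one_lt ha hw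

lemma hermite {a : ℝ} (ha : 0 < a) {s : ℂ} (hs : 0 < s.re) (h1 : s ≠ 1) :
    ∫ t in Ioi (0 : ℝ), TT a s t / ((Real.exp (2 * π * t) - 1 : ℝ) : ℂ) = 1 / 2 * P1 a s := by
  have hG := Complex.Gamma_ne_zero_of_re_pos hs
  apply mul_left_cancel₀ hG
  rw [hermite_mellin ha hs, mellin_eq ha hs h1]
  ring

lemma TT_pow {a : ℝ} (ha : 0 < a) (n : ℕ) (s : ℂ) (t : ℝ) :
    (t : ℂ) ^ (2 * n) * TT a s t = ∑ m ∈ Finset.range (2 * n + 1),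
      (-1) ^ (m + n) * (Nat.choose (2 * n) m : ℂ) * (a : ℂ) ^ m * TT a (m + s - 2 * n) t := by
  have main : ∀ u : ℝ, ∑ m ∈ Finset.range (2 * n + 1),
      (-1) ^ (m + n) * (Nat.choose (2 * n) m : ℂ) * (a : ℂ) ^ m *
        (a + u * I : ℂ) ^ (-(m + s - 2 * n)) = (u : ℂ) ^ (2 * n) * (a + u * I : ℂ) ^ (-s) := by
    intro u
    have hz := add_I_ne ha u
    have e : (u : ℂ) ^ (2 * n) = (-1) ^ n * (-a + (a + u * I : ℂ)) ^ (2 * n) := by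
      rw [neg_add_cancel_left, mul_pow, pow_mul I, Complex.I_sq, mul_left_comm, ← mul_pow]
      simp
    rw [e, add_pow, Finset.mul_sum, Finset.sum_mul]
    refine Finset.sum_congr rfl fun m hm => ?_
    have hm' : m ≤ 2 * n := by have := Finset.mem_range.1 hm; omega
    have e2 : (-(m + s - 2 * n) : ℂ) = ((2 * n - m : ℕ) : ℂ) + -s := by
      push_cast [Nat.cast_sub hm']; ring
    rw [e2, Complex.cpow_add _ _ hz, Complex.cpow_natCast, neg_pow (a : ℂ) m, pow_add]
    ring
  have e1 : (a - t * I : ℂ) = a + ((-t : ℝ) : ℂ) * I := by push_cast; ring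
  have m1 := main t
  have m2 := main (-t)
  have e3 : ((-t : ℝ) : ℂ) ^ (2 * n) = (t : ℂ) ^ (2 * n) := by
    push_cast; rw [pow_mul, neg_sq, ← pow_mul]
  rw [e3] at m2
  simp_rw [TT_eq ha, e1]
  rw [mul_div_assoc', mul_sub, ← m1, ← m2, ← Finset.sum_sub_distrib, Finset.sum_div]
  refine Finset.sum_congr rfl fun m hm => ?_
  ring

theorem stmt_8 (n : ℕ) (a : ℝ) (ha : 0 < a) (s : ℂ)
    (hs : (2 * n : ℝ) < s.re) (hs1 : s - 2 * n ≠ 1) :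
    ∫ t in Ioi (0 : ℝ),
        (t : ℂ) ^ (2 * n) * Complex.sin (s * (Real.arctan (t / a) : ℂ)) /
          (((a ^ 2 + t ^ 2 : ℝ) : ℂ) ^ (s / 2) * ((Real.exp (2 * π * t) - 1 : ℝ) : ℂ)) =
      (1 / 2) * ∑ m ∈ Finset.range (2 * n + 1),
        (-1) ^ (m + n) * (Nat.choose (2 * n) m : ℂ) * (a : ℂ) ^ m *
          P1 a (m + s - 2 * n) := by
  have hre : ∀ m : ℕ, 0 < ((m : ℂ) + s - 2 * n).re := by
    intro m
    have : (0 : ℝ) ≤ m := by positivity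
    simp
    linarith
  have hne : ∀ m : ℕ, (m : ℂ) + s - 2 * n ≠ 1 := by
    intro m h
    rcases Nat.eq_zero_or_pos m with h0 | h0
    · subst h0
      apply hs1
      simpa using h
    · have h2 := congrArg Complex.re h
      have : (1 : ℝ) ≤ m := by exact_mod_cast h0
      simp at h2
      linarith
  have key : ∀ t : ℝ, (t : ℂ) ^ (2 * n) * Complex.sin (s * (Real.arctan (t / a) : ℂ)) /
          (((a ^ 2 + t ^ 2 : ℝ) : ℂ) ^ (s / 2) * ((Real.exp (2 * π * t) - 1 : ℝ) : ℂ)) =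
      ∑ m ∈ Finset.range (2 * n + 1),
        (-1) ^ (m + n) * (Nat.choose (2 * n) m : ℂ) * (a : ℂ) ^ m *
          (TT a (m + s - 2 * n) t / ((Real.exp (2 * π * t) - 1 : ℝ) : ℂ)) := by
    intro t
    have h := TT_pow ha n s t
    rw [← div_div, mul_div_assoc]
    change (t : ℂ) ^ (2 * n) * TT a s t / _ = _
    rw [h, Finset.sum_div]
    exact Finset.sum_congr rfl fun m _ => by ring
  simp_rw [key]
  rw [integral_finsetSum _ fun m _ => (hermite_integrable ha (hre m)).const_mul _, Finset.mul_sum]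
  refine Finset.sum_congr rfl fun m _ => ?_
  rw [integral_const_mul, hermite ha (hre m) (hne m)]
  ring
end

section
/- For w > 0, ∫₀^∞ sin(wt)/sinh(πt) dt = (1/2) tanh(w/2). -/
open Real MeasureTheory Set

lemma aux_congr {f g : ℕ → ℝ} {a : ℝ} (h : ∀ n, f n = g n) : HasSum f a ↔ HasSum g a := by
  rw [funext h]

lemma aux_coth (w : ℝ) (hw : 0 < w) :
    HasSum (fun n : ℕ => 2 * w / (w ^ 2 + (n * π) ^ 2)) (cosh w / sinh w + 1 / w) := by
  have hpi := Real.pi_pos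
  have hpiC : (π : ℂ) ≠ 0 := by exact_mod_cast hpi.ne'
  have hwC : (w : ℂ) ≠ 0 := by exact_mod_cast hw.ne'
  have hs : (0 : ℝ) < sinh w := Real.sinh_pos_iff.mpr hw
  have hsC : (Complex.sinh (w : ℂ)) ≠ 0 := by
    rw [← Complex.ofReal_sinh]; exact_mod_cast hs.ne'
  set x : ℂ := (w / π : ℂ) * Complex.I with hx
  have him : 0 < x.im := by
    have : x = ((w / π : ℝ) : ℂ) * Complex.I := by push_cast; rfl
    rw [this]
    simp only [Complex.mul_im, Complex.ofReal_re, Complex.ofReal_im, Complex.I_re, Complex.I_im]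
    have : 0 < w / π := by positivity
    linarith
  have hz : x ∈ Complex.integerComplement := UpperHalfPlane.coe_mem_integerComplement ⟨x, him⟩
  have h1 : HasSum (fun n => cotTerm x n) (π * Complex.cot (π * x) - 1 / x) := by
    rw [cot_series_rep' hz]
    exact (summable_cotTerm hz).hasSum
  have h2 := h1.mul_left (Complex.I / π)
  have e1 : (Complex.I / π) * (π * Complex.cot (π * x) - 1 / x)
      = ((cosh w / sinh w - 1 / w : ℝ) : ℂ) := by
    have : (π : ℂ) * x = w * Complex.I := by rw [hx]; field_simp
    rw [this, Complex.cot_eq_cos_div_sin, Complex.cos_mul_I, Complex.sin_mul_I, hx]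
    push_cast
    have hI := Complex.I_ne_zero
    field_simp
  have e2 : ∀ n : ℕ, (Complex.I / π) * cotTerm x n
      = ((2 * w / (w ^ 2 + (((n + 1 : ℕ) : ℝ) * π) ^ 2) : ℝ) : ℂ) := by
    intro n
    have hd : (0 : ℝ) < w ^ 2 + (((n + 1 : ℕ) : ℝ) * π) ^ 2 := by positivity
    have hdC : ((w : ℂ) ^ 2 + (((n : ℂ) + 1) * π) ^ 2) ≠ 0 := by
      have := hd.ne'
      push_cast at this
      exact_mod_cast this
    have a1 : x + ((n : ℂ) + 1) ≠ 0 := by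
      simpa using Complex.integerComplement_add_ne_zero hz ((n : ℤ) + 1)
    have a2 : x - ((n : ℂ) + 1) ≠ 0 := by
      have := Complex.integerComplement_add_ne_zero hz (-((n : ℤ) + 1))
      push_cast at this
      simpa only [sub_eq_add_neg] using this
    have hxI : x * π = w * Complex.I := by rw [hx]; field_simp
    have hq : (x - ((n : ℂ) + 1)) * (x + ((n : ℂ) + 1)) * π ^ 2
        = -((w : ℂ) ^ 2 + (((n : ℂ) + 1) * π) ^ 2) := by
      have : (x * π) ^ 2 = - (w : ℂ) ^ 2 := by rw [hxI, mul_pow, Complex.I_sq]; ring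
      linear_combination this
    rw [cotTerm, div_add_div _ _ a2 a1]
    push_cast
    rw [div_mul_div_comm, div_eq_div_iff (mul_ne_zero hpiC (mul_ne_zero a2 a1)) hdC]
    apply mul_left_cancel₀ hpiC
    have hI := Complex.I_sq
    linear_combination (-2 * (w : ℂ)) * hq +
      2 * Complex.I * ((w : ℂ) ^ 2 + (((n : ℂ) + 1) * π) ^ 2) * hxI
      + 2 * w * ((w : ℂ) ^ 2 + (((n : ℂ) + 1) * π) ^ 2) * hI
  rw [e1] at h2
  simp_rw [e2] at h2
  have h3 := Complex.hasSum_ofReal.mp h2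
  have h4 := (hasSum_nat_add_iff (f := fun n : ℕ => 2 * w / (w ^ 2 + (n * π) ^ 2)) 1).mp h3
  have h5 : cosh w / sinh w - 1 / w
      + ∑ i ∈ Finset.range 1, 2 * w / (w ^ 2 + ((i : ℝ) * π) ^ 2) = cosh w / sinh w + 1 / w := by
    rw [Finset.sum_range_one]
    push_cast
    field_simp
    ring
  rw [h5] at h4
  exact h4

lemma aux_tanh (w : ℝ) (hw : 0 < w) :
    HasSum (fun n : ℕ => 2 * w / (w ^ 2 + ((2 * n + 1) * π) ^ 2)) ((1 / 2) * tanh (w / 2)) := by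
  have h1 := aux_coth w hw
  have h2 := (aux_coth (w / 2) (by positivity)).mul_left (1 / 2)
  set f : ℕ → ℝ := fun n => 2 * w / (w ^ 2 + (n * π) ^ 2) with hf
  have hodd : Summable (fun n : ℕ => f (2 * n + 1)) :=
    h1.summable.comp_injective (i := fun n : ℕ => 2 * n + 1) (fun a b h => by simpa using h)
  have heven : HasSum (fun n : ℕ => f (2 * n))
      (1 / 2 * (cosh (w / 2) / sinh (w / 2) + 1 / (w / 2))) := by
    refine (aux_congr fun n => ?_).mp h2
    rw [hf]
    have : (0 : ℝ) < w ^ 2 + (((2 * n : ℕ) : ℝ) * π) ^ 2 := by positivity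
    have : (0 : ℝ) < (w / 2) ^ 2 + (n * π) ^ 2 := by positivity
    push_cast
    field_simp
  have h3 := heven.even_add_odd hodd.hasSum
  have h4 := h3.unique h1
  have h5 := hodd.hasSum
  have h6 : ∑' n : ℕ, f (2 * n + 1) = (1 / 2) * tanh (w / 2) := by
    have hs : 0 < sinh (w / 2) := Real.sinh_pos_iff.mpr (by positivity)
    have hc : 0 < cosh (w / 2) := Real.cosh_pos _
    have e : cosh w / sinh w = (cosh (w / 2) ^ 2 + sinh (w / 2) ^ 2)
        / (2 * sinh (w / 2) * cosh (w / 2)) := by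
      rw [← Real.cosh_two_mul, ← Real.sinh_two_mul]
      congr 2 <;> ring
    have : ∑' n : ℕ, f (2 * n + 1) = cosh w / sinh w + 1 / w
      - (1 / 2 * (cosh (w / 2) / sinh (w / 2) + 1 / (w / 2))) := by linarith
    rw [this, e, Real.tanh_eq_sinh_div_cosh]
    field_simp
    ring
  rw [h6] at h5
  refine (aux_congr fun n => ?_).mp h5
  rw [hf]; push_cast; rfl

lemma aux_int (w a : ℝ) (ha : 0 < a) :
    IntegrableOn (fun t : ℝ => sin (w * t) * exp (-(a * t))) (Ioi 0) ∧
    ∫ t in Ioi (0 : ℝ), sin (w * t) * exp (-(a * t)) = w / (w ^ 2 + a ^ 2) := by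
  set c : ℂ := -a + w * Complex.I with hc
  have hre : c.re < 0 := by simp [hc, ha]
  have hI := integrableOn_exp_mul_complex_Ioi hre 0
  have hV := integral_exp_mul_complex_Ioi hre 0
  have e : ∀ t : ℝ, (Complex.exp (c * t)).im = sin (w * t) * exp (-(a * t)) := by
    intro t
    rw [Complex.exp_im]
    simp [hc]
    ring
  constructor
  · have := hI.im
    simpa [IntegrableOn, e] using this
  · have h := integral_im (𝕜 := ℂ) hI
    simp only [RCLike.im_to_complex, e] at h
    rw [h, hV]
    simp [hc, Complex.div_im, Complex.normSq_apply]
    ring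

lemma aux_abs (w a : ℝ) (hw : 0 < w) (ha : 0 < a) :
    ∫ t in Ioi (0 : ℝ), ‖sin (w * t) * exp (-(a * t))‖ ≤ w / a ^ 2 := by
  have hV := Real.integral_rpow_mul_exp_neg_mul_Ioi (a := 2) (by norm_num) ha
  have hint : IntegrableOn (fun t : ℝ => t ^ ((2 : ℝ) - 1) * exp (-(a * t))) (Ioi 0) :=
    .of_integral_ne_zero (by rw [hV]; positivity)
  have : w / a ^ 2 = ∫ t in Ioi (0 : ℝ), w * (t ^ ((2 : ℝ) - 1) * exp (-(a * t))) := by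
    rw [integral_const_mul, hV, Real.Gamma_two]
    norm_num
    rfl
  rw [this]
  apply setIntegral_mono_on (aux_int w a ha).1.norm (hint.const_mul w) measurableSet_Ioi
  intro t ht
  have ht : 0 < t := ht
  rw [norm_mul, Real.norm_eq_abs, Real.norm_eq_abs, Real.abs_exp, ← mul_assoc]
  gcongr
  have : (2 : ℝ) - 1 = 1 := by norm_num
  rw [this, Real.rpow_one]
  calc |sin (w * t)| ≤ |w * t| := Real.abs_sin_le_abs
    _ = w * t := abs_of_pos (by positivity)

theorem stmt_12 (w : ℝ) (hw : 0 < w) :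
    ∫ t in Ioi (0 : ℝ), Real.sin (w * t) / Real.sinh (π * t) =
      (1 / 2) * Real.tanh (w / 2) := by
  have hpi := Real.pi_pos
  have ha : ∀ n : ℕ, 0 < (2 * (n : ℝ) + 1) * π := fun n => by positivity
  have hsum : Summable fun n : ℕ =>
      ∫ t in Ioi (0 : ℝ), ‖2 * (sin (w * t) * exp (-((2 * (n : ℝ) + 1) * π * t)))‖ := by
    have hs : Summable (fun n : ℕ => 2 * w * (1 / ((n + 1 : ℕ) : ℝ) ^ 2)) :=
      ((summable_nat_add_iff 1).mpr
        (Real.summable_one_div_nat_pow.mpr (by norm_num : 1 < 2))).mul_left _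
    refine Summable.of_nonneg_of_le (fun n => integral_nonneg fun _ => norm_nonneg _)
      (fun n => ?_) hs
    simp_rw [norm_mul (2 : ℝ)]
    rw [integral_const_mul, Real.norm_of_nonneg (by norm_num : (0 : ℝ) ≤ 2), mul_assoc]
    refine mul_le_mul_of_nonneg_left ((aux_abs w _ hw (ha n)).trans ?_) (by norm_num)
    rw [mul_one_div]
    have : ((n + 1 : ℕ) : ℝ) ≤ (2 * (n : ℝ) + 1) * π := by
      push_cast
      have : (0 : ℝ) ≤ n := n.cast_nonneg
      nlinarith [Real.pi_gt_three]
    gcongr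
  have key := hasSum_integral_of_summable_integral_norm
    (μ := volume.restrict (Ioi (0 : ℝ)))
    (F := fun (n : ℕ) (t : ℝ) => 2 * (sin (w * t) * exp (-((2 * (n : ℝ) + 1) * π * t))))
    (fun n => (aux_int w _ (ha n)).1.const_mul 2) hsum
  have e1 : ∫ t in Ioi (0 : ℝ), ∑' n : ℕ,
      2 * (sin (w * t) * exp (-((2 * (n : ℝ) + 1) * π * t)))
      = ∫ t in Ioi (0 : ℝ), Real.sin (w * t) / Real.sinh (π * t) := by
    refine setIntegral_congr_fun measurableSet_Ioi fun t ht => ?_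
    have ht : 0 < t := ht
    have hpt : 0 < π * t := by positivity
    have hlt : exp (-(2 * (π * t))) < 1 := by
      rw [Real.exp_lt_one_iff]; linarith
    have hg := (hasSum_geometric_of_lt_one (Real.exp_pos _).le hlt).mul_left
      (2 * sin (w * t) * exp (-(π * t)))
    have : (fun n : ℕ => 2 * (sin (w * t) * exp (-((2 * (n : ℝ) + 1) * π * t))))
        = fun n : ℕ => 2 * sin (w * t) * exp (-(π * t)) * exp (-(2 * (π * t))) ^ n := by
      funext n
      rw [← Real.exp_nat_mul, mul_assoc (2 * sin (w * t)), ← Real.exp_add, ← mul_assoc]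
      congr 2; ring
    change ∑' n : ℕ, 2 * (sin (w * t) * exp (-((2 * (n : ℝ) + 1) * π * t))) = _
    rw [this, hg.tsum_eq, Real.sinh_eq]
    have h1 : exp (-(2 * (π * t))) = exp (-(π * t)) * exp (-(π * t)) := by
      rw [← Real.exp_add]; congr 1; ring
    have h2 : exp (π * t) * exp (-(π * t)) = 1 := by rw [← Real.exp_add]; simp
    have h3 : exp (-(π * t)) < exp (π * t) := Real.exp_lt_exp.mpr (by linarith)
    have h4 : exp (π * t) - exp (-(π * t)) ≠ 0 := by linarith
    have h5 : 1 - exp (-(2 * (π * t))) ≠ 0 := by linarith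
    rw [← div_eq_mul_inv, div_div_eq_mul_div, div_eq_div_iff h5 h4, h1]
    linear_combination 2 * sin (w * t) * h2
  rw [e1] at key
  refine key.unique ?_
  refine (aux_congr fun n => ?_).mp (aux_tanh w hw)
  rw [integral_const_mul, (aux_int w _ (ha n)).2]
  ring
end

section
/- For w > 0 and β > 0, ∫₀^∞ sin(wt)/(e^{βt} + 1) dt = 1/(2w) − π/(2β sinh(πw/β)). -/
open Real MeasureTheory Set

lemma coth_series (y : ℝ) (hy : 0 < y) :
    HasSum (fun n : ℕ => y / (y ^ 2 + ((n : ℝ) + 1) ^ 2))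
      ((π * Real.cosh (π * y) / Real.sinh (π * y) - 1 / y) / 2) := by
  have hz : (y * Complex.I : ℂ) ∈ Complex.integerComplement := by
    rintro ⟨n, hn⟩
    have := congrArg Complex.im hn
    simp at this
    exact hy.ne this
  have hyc : (y : ℂ) ≠ 0 := by exact_mod_cast hy.ne'
  have h := (summable_cotTerm hz).hasSum
  rw [← cot_series_rep' hz] at h
  have h2 := h.mul_left (Complex.I / 2)
  rw [← Complex.hasSum_ofReal]
  convert h2 using 1
  · rfl
  · ext n
    rw [cotTerm_identity hz]
    have h3 : ((y : ℂ) ^ 2 + ((n : ℂ) + 1) ^ 2) ≠ 0 := by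
      have : 0 < y ^ 2 + ((n : ℝ) + 1) ^ 2 := by positivity
      exact_mod_cast this.ne'
    have h4 : (y * Complex.I + ((n : ℂ) + 1)) * (y * Complex.I - ((n : ℂ) + 1))
        = -((y : ℂ) ^ 2 + ((n : ℂ) + 1) ^ 2) := by
      ring_nf; rw [Complex.I_sq]; ring
    rw [h4]
    push_cast
    field_simp
    rw [Complex.I_sq]; ring
  · have hs : Complex.sinh (π * y) ≠ 0 := by
      have : Real.sinh (π * y) ≠ 0 := (Real.sinh_pos_iff.2 (by positivity)).ne'
      exact_mod_cast this
    rw [Complex.cot_eq_cos_div_sin, ← mul_assoc, Complex.cos_mul_I, Complex.sin_mul_I]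
    push_cast
    field_simp
    try rw [Complex.I_sq]
    try ring

lemma alt_series (y : ℝ) (hy : 0 < y) :
    HasSum (fun n : ℕ => (-1 : ℝ) ^ n * (y / (y ^ 2 + ((n : ℝ) + 1) ^ 2)))
      (1 / (2 * y) - π / (2 * Real.sinh (π * y))) := by
  have h1 := coth_series y hy
  have h2 := coth_series (y / 2) (by positivity)
  -- the series supported on odd indices
  have h3 : HasSum (fun n : ℕ => (1 - (-1 : ℝ) ^ n) * (y / (y ^ 2 + ((n : ℝ) + 1) ^ 2)))
      (0 + ((π * Real.cosh (π * (y / 2)) / Real.sinh (π * (y / 2)) - 1 / (y / 2)) / 2)) := by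
    apply HasSum.even_add_odd
    · simp
    · convert h2 using 2 with n
      have : (-1 : ℝ) ^ (2 * n + 1) = -1 := by simp [pow_succ, pow_mul]
      rw [this]
      push_cast
      field_simp
      ring
  have h4 := h1.sub h3
  convert h4 using 1
  · rfl
  · ext n; ring
  · have hs : 0 < Real.sinh (π * (y / 2)) := Real.sinh_pos_iff.2 (by positivity)
    have e : π * y = 2 * (π * (y / 2)) := by ring
    rw [e, Real.cosh_two_mul, Real.sinh_two_mul]
    have hc := Real.cosh_pos (π * (y / 2))
    have := Real.cosh_sq (π * (y / 2))
    generalize Real.cosh (π * (y / 2)) = c at *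
    generalize Real.sinh (π * (y / 2)) = s at *
    field_simp
    rw [this]
    linear_combination (2 * y * π) * this

lemma int_exp_sin (w a : ℝ) (ha : 0 < a) :
    ∫ t in Ioi (0 : ℝ), Real.exp (-a * t) * Real.sin (w * t) = w / (a ^ 2 + w ^ 2) := by
  have hre : (-a + w * Complex.I : ℂ).re < 0 := by simp [ha]
  have h := integral_exp_mul_complex_Ioi hre 0
  have hi := integrableOn_exp_mul_complex_Ioi hre 0
  have h2 := integral_im hi
  have h3 : ∀ t : ℝ, RCLike.im (Complex.exp ((-a + w * Complex.I : ℂ) * t))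
      = Real.exp (-a * t) * Real.sin (w * t) := by
    intro t
    simp [Complex.exp_im]
  simp_rw [h3] at h2
  rw [h2, h]
  have h5 : ((a : ℂ) ^ 2 + (w : ℂ) ^ 2) ≠ 0 := by
    have : 0 < a ^ 2 + w ^ 2 := by positivity
    exact_mod_cast this.ne'
  have h6 : (-a + w * Complex.I : ℂ) ≠ 0 := fun h0 => by simp [h0] at hre
  have h7 : -Complex.exp ((-a + w * Complex.I : ℂ) * (0 : ℝ)) / (-a + w * Complex.I : ℂ)
      = ((a / (a ^ 2 + w ^ 2) : ℝ) : ℂ) + ((w / (a ^ 2 + w ^ 2) : ℝ) : ℂ) * Complex.I := by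
    rw [div_eq_iff h6]
    push_cast
    simp only [mul_zero, Complex.exp_zero]
    field_simp
    ring_nf
    rw [Complex.I_sq]
    ring
  rw [h7]
  rw [RCLike.im_eq_complex_im, Complex.add_im, Complex.ofReal_im, Complex.im_ofReal_mul, Complex.I_im]
  ring

lemma int_t_exp (a : ℝ) (ha : 0 < a) :
    IntegrableOn (fun t : ℝ => t * Real.exp (-a * t)) (Ioi 0) ∧
    ∫ t in Ioi (0 : ℝ), t * Real.exp (-a * t) = 1 / a ^ 2 := by
  have h := Real.integral_rpow_mul_exp_neg_mul_Ioi (a := 2) (r := a) (by norm_num) ha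
  have h' : ∫ t in Ioi (0 : ℝ), t * Real.exp (-a * t) = 1 / a ^ 2 := by
    norm_num at h
    simp only [neg_mul, one_div]
    exact h
  refine ⟨?_, h'⟩
  by_contra hc
  have := integral_undef hc
  rw [this] at h'
  have : 0 < 1 / a ^ 2 := by positivity
  linarith

theorem stmt_13 (w β : ℝ) (hw : 0 < w) (hβ : 0 < β) :
    ∫ t in Ioi (0 : ℝ), Real.sin (w * t) / (Real.exp (β * t) + 1) =
      1 / (2 * w) - π / (2 * β * Real.sinh (π * w / β)) := by
  have hb : ∀ n : ℕ, 0 < β * ((n : ℝ) + 1) := fun n => by positivity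
  set F : ℕ → ℝ → ℝ := fun n t =>
    (-1 : ℝ) ^ n * (Real.exp (-(β * ((n : ℝ) + 1)) * t) * Real.sin (w * t)) with hF
  have hbd : ∀ n, ∀ t ∈ Ioi (0 : ℝ), ‖F n t‖ ≤ w * (t * Real.exp (-(β * ((n : ℝ) + 1)) * t)) := by
    intro n t ht
    have ht' : 0 < t := ht
    simp only [hF, norm_mul, norm_pow, norm_neg, norm_one, one_pow, one_mul, Real.norm_eq_abs,
      Real.abs_exp]
    have : |Real.sin (w * t)| ≤ w * t := by
      have := Real.abs_sin_le_abs (x := w * t)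
      rwa [abs_of_pos (by positivity : 0 < w * t)] at this
    nlinarith [Real.exp_pos (-(β * ((n : ℝ) + 1)) * t)]
  have hgi : ∀ n : ℕ, IntegrableOn
      (fun t : ℝ => w * (t * Real.exp (-(β * ((n : ℝ) + 1)) * t))) (Ioi 0) :=
    fun n => (int_t_exp _ (hb n)).1.const_mul w
  have hFi : ∀ n, Integrable (F n) (volume.restrict (Ioi 0)) := by
    intro n
    refine Integrable.mono' (hgi n) ?_ ?_
    · exact Continuous.aestronglyMeasurable (by simp only [hF]; fun_prop)
    · exact (ae_restrict_mem measurableSet_Ioi).mono (hbd n)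
  have hle : ∀ n, ∫ t in Ioi (0 : ℝ), ‖F n t‖ ≤ w / β ^ 2 * (1 / ((n : ℝ) + 1) ^ 2) := by
    intro n
    calc _ ≤ ∫ t in Ioi (0 : ℝ), w * (t * Real.exp (-(β * ((n : ℝ) + 1)) * t)) :=
          setIntegral_mono_on (hFi n).norm (hgi n) measurableSet_Ioi (hbd n)
      _ = _ := by
          rw [integral_const_mul, (int_t_exp _ (hb n)).2]
          field_simp
  have hsum : Summable (fun n => ∫ t in Ioi (0 : ℝ), ‖F n t‖) := by
    refine Summable.of_nonneg_of_le (fun n => integral_nonneg fun t => norm_nonneg _) hle ?_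
    apply Summable.mul_left
    have := (summable_nat_add_iff 1).2 (Real.summable_one_div_nat_pow.2 (by norm_num : 1 < 2))
    simpa using this
  have hmain := hasSum_integral_of_summable_integral_norm hFi hsum
  have hcong : ∫ t in Ioi (0 : ℝ), ∑' n, F n t =
      ∫ t in Ioi (0 : ℝ), Real.sin (w * t) / (Real.exp (β * t) + 1) := by
    refine setIntegral_congr_fun measurableSet_Ioi fun t ht => ?_
    have ht' : 0 < t := ht
    have hlt : Real.exp (-(β * t)) < 1 := by
      rw [Real.exp_lt_one_iff]
      have := mul_pos hβ ht'
      linarith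
    have hg := hasSum_geometric_of_abs_lt_one (r := -Real.exp (-(β * t)))
      (by rwa [abs_neg, Real.abs_exp])
    have hg2 := hg.mul_left (Real.exp (-(β * t)) * Real.sin (w * t))
    have : ∀ n, F n t = Real.exp (-(β * t)) * Real.sin (w * t) * (-Real.exp (-(β * t))) ^ n := by
      intro n
      simp only [hF]
      rw [neg_pow (Real.exp _), ← Real.exp_nat_mul]
      have : -(β * ((n : ℝ) + 1)) * t = -(β * t) + n * -(β * t) := by ring
      rw [this, Real.exp_add]
      ring
    simp only [this]
    rw [hg2.tsum_eq, Real.exp_neg]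
    have := Real.exp_pos (β * t)
    have h8 : 1 - -(Real.exp (β * t))⁻¹ = (Real.exp (β * t) + 1) / Real.exp (β * t) := by
      field_simp
      ring
    rw [h8]
    field_simp
  rw [hcong] at hmain
  refine hmain.unique ?_
  have hy : 0 < w / β := by positivity
  convert (alt_series (w / β) hy).mul_left (1 / β) using 1
  · rfl
  · ext n
    simp only [hF]
    rw [integral_const_mul, int_exp_sin _ _ (hb n)]
    field_simp
    try ring
  · have : 0 < Real.sinh (π * (w / β)) := Real.sinh_pos_iff.2 (by positivity)
    rw [mul_div_assoc π w β]
    field_simp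
end
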